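/- A function a : R⁺ → ℂ satisfies a(α+β) = a(α) + a(β) for all α, β ∈ R⁺ with α+β ∈ R⁺ if and only if a is a ℂ-linear combination of the coordinate functions A₁,…,Aₙ; consequently the vector space of such functions is n-dimensional with basis A₁,…,Aₙ. -/

import Mathlib

open scoped InnerProductSpace

/-- The combinatorial data attached to a simple finite-dimensional complex Lie algebra `𝔤`
of rank `n` with a fixed Cartan subalgebra and a fixed system of simple roots
`α₁, …, αₙ`: a reduced crystallographic *irreducible* root system `R` in a euclidean
space `V`, together with a base `simple : Fin n → V` (the simple roots) and the coordinate
functions `coord`, recording for each positive root `α = Σᵢ Aᵢ(α) αᵢ` the tuple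
`(A₁(α), …, Aₙ(α))` of its coordinates with respect to the simple roots. -/
structure RootSystemBase (n : ℕ) (V : Type*) [NormedAddCommGroup V]
    [InnerProductSpace ℝ V] : Type _ where
  /-- The (finite) set of roots. -/
  R : Finset V
  zero_not_mem : (0 : V) ∉ R
  span_eq_top : Submodule.span ℝ (R : Set V) = ⊤
  reduced : ∀ α ∈ R, ∀ c : ℝ, c • α ∈ R → c = 1 ∨ c = -1
  crystallographic : ∀ α ∈ R, ∀ β ∈ R, ∃ k : ℤ, (k : ℝ) = 2 * ⟪β, α⟫_ℝ / ⟪α, α⟫_ℝ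
  reflect_mem : ∀ α ∈ R, ∀ β ∈ R, β - (2 * ⟪β, α⟫_ℝ / ⟪α, α⟫_ℝ) • α ∈ R
  /-- irreducibility: `R` is not the union of two nonempty orthogonal subsets;
  equivalently `𝔤` is simple rather than merely semisimple. -/
  irreducible : ∀ S : Finset V, S ⊆ R → (∀ α ∈ S, ∀ β ∈ R, β ∉ S → ⟪α, β⟫_ℝ = 0) →
    S = ∅ ∨ S = R
  /-- The simple roots `α₁, …, αₙ`. -/
  simple : Fin n → V
  simple_mem : ∀ i, simple i ∈ R
  simple_linearIndependent : LinearIndependent ℝ simple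
  /-- `coord β i` is the coefficient `Aᵢ(β)` of `β` in the basis of simple roots. -/
  coord : V → Fin n → ℤ
  root_eq_sum : ∀ β ∈ R, β = ∑ i, (coord β i : ℝ) • simple i
  coord_sign : ∀ β ∈ R, (∀ i, 0 ≤ coord β i) ∨ (∀ i, coord β i ≤ 0)

namespace RootSystemBase

variable {n : ℕ} {V : Type*} [NormedAddCommGroup V] [InnerProductSpace ℝ V]
variable (Φ : RootSystemBase n V)

/-- `β` is a positive root. -/
def IsPos (β : V) : Prop := β ∈ Φ.R ∧ ∀ i, 0 ≤ Φ.coord β i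

/-- The level `l(β) = Σᵢ Aᵢ(β)` of a root `β`. -/
def level (β : V) : ℤ := ∑ i, Φ.coord β i

/-- `μ` is the highest root. -/
def IsHighest (μ : V) : Prop :=
  Φ.IsPos μ ∧ ∀ β, Φ.IsPos β → ∀ i, Φ.coord β i ≤ Φ.coord μ i

end RootSystemBase

namespace RootSystemBase

variable {n : ℕ} {V : Type*} [NormedAddCommGroup V] [InnerProductSpace ℝ V]
variable (Φ : RootSystemBase n V)

/-- The space of functions `a : R⁺ → ℂ` satisfying `a (α + β) = a α + a β`
whenever `α`, `β` and `α + β` are positive roots. -/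
noncomputable def addFunctions : Submodule ℂ ({β : V // Φ.IsPos β} → ℂ) where
  carrier := {a | ∀ (α β : {β : V // Φ.IsPos β}) (h : Φ.IsPos (α.1 + β.1)),
    a ⟨α.1 + β.1, h⟩ = a α + a β}
  add_mem' := by
    intro a b ha hb α β h
    simp only [Pi.add_apply, ha α β h, hb α β h]; ring
  zero_mem' := by intro α β h; simp
  smul_mem' := by
    intro c a ha α β h
    simp only [Pi.smul_apply, ha α β h, smul_eq_mul]; ring

end RootSystemBase

namespace RootSystemBase

variable {n : ℕ} {V : Type*} [NormedAddCommGroup V] [InnerProductSpace ℝ V]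
variable (Φ : RootSystemBase n V)

lemma coord_unique {β : V} (hβ : β ∈ Φ.R) (f : Fin n → ℤ)
    (h : β = ∑ i, (f i : ℝ) • Φ.simple i) : ∀ i, Φ.coord β i = f i := by
  have h1 := Φ.root_eq_sum β hβ
  have h2 : ∑ i, ((Φ.coord β i : ℝ) - (f i : ℝ)) • Φ.simple i = 0 := by
    simp only [sub_smul, Finset.sum_sub_distrib]
    rw [← h1, ← h, sub_self]
  intro i
  have h3 := Fintype.linearIndependent_iff.1 Φ.simple_linearIndependent _ h2 i
  exact_mod_cast sub_eq_zero.1 h3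

lemma coord_add {α β : V} (hα : α ∈ Φ.R) (hβ : β ∈ Φ.R) (h : α + β ∈ Φ.R) (i : Fin n) :
    Φ.coord (α + β) i = Φ.coord α i + Φ.coord β i := by
  refine Φ.coord_unique h (fun i => Φ.coord α i + Φ.coord β i) ?_ i
  push_cast
  simp only [add_smul, Finset.sum_add_distrib]
  rw [← Φ.root_eq_sum α hα, ← Φ.root_eq_sum β hβ]

lemma coord_simple (i j : Fin n) :
    Φ.coord (Φ.simple i) j = if j = i then 1 else 0 := by
  refine Φ.coord_unique (Φ.simple_mem i) (fun j => if j = i then 1 else 0) ?_ j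
  simp

lemma isPos_simple (i : Fin n) : Φ.IsPos (Φ.simple i) := by
  refine ⟨Φ.simple_mem i, fun j => ?_⟩
  rw [coord_simple]
  split_ifs <;> simp

lemma inner_self_pos' {β : V} (hβ : β ∈ Φ.R) : 0 < ⟪β, β⟫_ℝ := by
  apply real_inner_self_pos.2
  rintro rfl
  exact Φ.zero_not_mem hβ

lemma neg_mem_R {β : V} (hβ : β ∈ Φ.R) : -β ∈ Φ.R := by
  have h := Φ.reflect_mem β hβ β hβ
  have h0 := Φ.inner_self_pos' hβ
  rw [mul_div_assoc, div_self h0.ne', mul_one, two_smul] at h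
  simpa using h

lemma sub_mem_R {α β : V} (hα : α ∈ Φ.R) (hβ : β ∈ Φ.R) (hne : β ≠ α)
    (h : 0 < ⟪β, α⟫_ℝ) : β - α ∈ Φ.R := by
  obtain ⟨p, hp⟩ := Φ.crystallographic α hα β hβ
  obtain ⟨q, hq⟩ := Φ.crystallographic β hβ α hα
  have ha := Φ.inner_self_pos' hα
  have hb := Φ.inner_self_pos' hβ
  have hc : ⟪α, β⟫_ℝ = ⟪β, α⟫_ℝ := real_inner_comm _ _
  have hrp := Φ.reflect_mem α hα β hβ
  have hrq := Φ.reflect_mem β hβ α hα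
  rw [← hp] at hrp
  rw [← hq] at hrq
  have p0 : 0 < p := by
    have : (0 : ℝ) < p := by rw [hp]; positivity
    exact_mod_cast this
  have q0 : 0 < q := by
    have : (0 : ℝ) < q := by rw [hq, hc]; positivity
    exact_mod_cast this
  by_cases p1 : p = 1
  · subst p1; simpa using hrp
  by_cases q1 : q = 1
  · subst q1
    have := Φ.neg_mem_R hrq
    simpa using this
  exfalso
  have p2 : (2 : ℝ) ≤ p := by exact_mod_cast (by omega : (2 : ℤ) ≤ p)
  have q2 : (2 : ℝ) ≤ q := by exact_mod_cast (by omega : (2 : ℤ) ≤ q)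
  rw [hp, le_div_iff₀ ha] at p2
  rw [hq, hc, le_div_iff₀ hb] at q2
  have h3 : 0 < ⟪β - α, β - α⟫_ℝ := real_inner_self_pos.2 (sub_ne_zero.2 hne)
  rw [inner_sub_left, inner_sub_right, inner_sub_right, hc] at h3
  linarith

lemma exists_sub_pos {β : V} (hβ : Φ.IsPos β) (hns : ∀ i, β ≠ Φ.simple i) :
    ∃ i, ∃ γ, Φ.IsPos γ ∧ β = γ + Φ.simple i := by
  have hb := Φ.inner_self_pos' hβ.1
  have h1 : ⟪β, β⟫_ℝ = ∑ i, (Φ.coord β i : ℝ) * ⟪β, Φ.simple i⟫_ℝ := by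
    conv_lhs => rw [Φ.root_eq_sum β hβ.1]
    rw [← Φ.root_eq_sum β hβ.1]
    conv_lhs => arg 3; rw [Φ.root_eq_sum β hβ.1]
    simp only [inner_sum, inner_smul_right]
  rw [h1] at hb
  obtain ⟨i, hi⟩ : ∃ i, 0 < (Φ.coord β i : ℝ) * ⟪β, Φ.simple i⟫_ℝ := by
    by_contra! hh
    exact absurd (Finset.sum_nonpos fun i _ => hh i) (not_le.2 hb)
  have c0 : (0 : ℝ) ≤ Φ.coord β i := by exact_mod_cast hβ.2 i
  have hin : 0 < ⟪β, Φ.simple i⟫_ℝ := pos_of_mul_pos_right hi c0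
  have c1 : 0 < Φ.coord β i := by
    have : (0 : ℝ) < Φ.coord β i := by
      by_contra hh
      have : (Φ.coord β i : ℝ) = 0 := by linarith
      simp [this] at hi
    exact_mod_cast this
  have hm := Φ.sub_mem_R (Φ.simple_mem i) hβ.1 (hns i) hin
  have e : β = (β - Φ.simple i) + Φ.simple i := by simp
  have hc : ∀ j, Φ.coord β j = Φ.coord (β - Φ.simple i) j + if j = i then 1 else 0 := by
    intro j
    rw [← Φ.coord_simple, ← Φ.coord_add hm (Φ.simple_mem i) (by rw [← e]; exact hβ.1), ← e]
  refine ⟨i, _, ⟨hm, ?_⟩, e⟩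
  rcases Φ.coord_sign _ hm with h | h
  · exact h
  · exfalso
    apply hns i
    have : ∀ j, Φ.coord β j = if j = i then 1 else 0 := by
      intro j
      have h1 := hc j
      have h2 := h j
      have h3 := hβ.2 j
      split_ifs at h1 ⊢ with hj
      · subst hj; omega
      · omega
    rw [Φ.root_eq_sum β hβ.1]
    simp [this]

lemma additive_eq (a : V → ℂ)
    (ha : ∀ α β : V, Φ.IsPos α → Φ.IsPos β → Φ.IsPos (α + β) → a (α + β) = a α + a β)
    (N : ℕ) : ∀ β, Φ.IsPos β → Φ.level β ≤ N →
      a β = ∑ i, a (Φ.simple i) * (Φ.coord β i : ℂ) := by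
  induction N with
  | zero =>
    intro β hβ hl
    exfalso
    have h0 : ∀ i, Φ.coord β i = 0 := by
      have h1 : Φ.level β = 0 := le_antisymm (by exact_mod_cast hl)
        (Finset.sum_nonneg fun i _ => hβ.2 i)
      intro i
      exact (Finset.sum_eq_zero_iff_of_nonneg fun i _ => hβ.2 i).1 h1 i (Finset.mem_univ i)
    have h2 := Φ.root_eq_sum β hβ.1
    simp only [h0, Int.cast_zero, zero_smul, Finset.sum_const_zero] at h2
    exact Φ.zero_not_mem (h2 ▸ hβ.1)
  | succ N ih =>
    intro β hβ hl
    by_cases hs : ∃ i, β = Φ.simple i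
    · obtain ⟨i, rfl⟩ := hs
      simp [coord_simple]
    · push Not at hs
      obtain ⟨i, γ, hγ, rfl⟩ := Φ.exists_sub_pos hβ hs
      have hc := Φ.coord_add hγ.1 (Φ.simple_mem i) hβ.1
      have hl2 : Φ.level γ ≤ N := by
        have : Φ.level (γ + Φ.simple i) = Φ.level γ + 1 := by
          simp [level, hc, coord_simple, Finset.sum_add_distrib]
        push_cast at hl
        omega
      rw [ha _ _ hγ (Φ.isPos_simple i) hβ, ih γ hγ hl2]
      simp [hc, coord_simple, mul_add, Finset.sum_add_distrib]

lemma additive_iff (a : V → ℂ) :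
    (∀ α β : V, Φ.IsPos α → Φ.IsPos β → Φ.IsPos (α + β) → a (α + β) = a α + a β) ↔
    (∃ c : Fin n → ℂ, ∀ α : V, Φ.IsPos α → a α = ∑ i, c i * (Φ.coord α i : ℂ)) := by
  constructor
  · intro ha
    exact ⟨fun i => a (Φ.simple i), fun α hα =>
      Φ.additive_eq a ha (Φ.level α).toNat α hα (Int.self_le_toNat _)⟩
  · rintro ⟨c, hc⟩ α β hα hβ h
    rw [hc _ h, hc _ hα, hc _ hβ, ← Finset.sum_add_distrib]
    refine Finset.sum_congr rfl fun i _ => ?_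
    rw [Φ.coord_add hα.1 hβ.1 h.1]
    push_cast
    ring

lemma coord_linearIndependent : LinearIndependent ℂ
    (fun i : Fin n => fun β : {β : V // Φ.IsPos β} => (Φ.coord β.1 i : ℂ)) := by
  rw [Fintype.linearIndependent_iff]
  intro g hg i
  have := congrFun hg ⟨Φ.simple i, Φ.isPos_simple i⟩
  simpa [coord_simple] using this

lemma span_coord : Submodule.span ℂ
      (Set.range fun i : Fin n => fun β : {β : V // Φ.IsPos β} => (Φ.coord β.1 i : ℂ)) =
      Φ.addFunctions := by
  classical
  apply le_antisymm
  · rw [Submodule.span_le]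
    rintro _ ⟨i, rfl⟩ α β h
    show (Φ.coord (α.1 + β.1) i : ℂ) = _
    rw [Φ.coord_add α.2.1 β.2.1 h.1]
    push_cast
    rfl
  · intro a ha
    rw [Submodule.mem_span_range_iff_exists_fun]
    obtain ⟨c, hc⟩ := (Φ.additive_iff (fun v => if h : Φ.IsPos v then a ⟨v, h⟩ else 0)).1 (by
      intro α β hα hβ h
      simp only [hα, hβ, h, dif_pos]
      exact ha ⟨α, hα⟩ ⟨β, hβ⟩ h)
    refine ⟨c, ?_⟩
    funext β
    have := hc β.1 β.2
    simp only [β.2, dif_pos] at this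
    simp [this]

end RootSystemBase

/-- A function `a : R⁺ → ℂ` satisfies `a (α+β) = a α + a β` for all
`α, β ∈ R⁺` with `α + β ∈ R⁺` if and only if `a` is a `ℂ`-linear combination of the
coordinate functions `A₁, …, Aₙ`; consequently the vector space of such functions is
`n`-dimensional with basis `A₁, …, Aₙ`. -/
theorem additive_functions_on_positive_roots
    {n : ℕ} {V : Type*} [NormedAddCommGroup V] [InnerProductSpace ℝ V]
    (Φ : RootSystemBase n V) :
    (∀ a : V → ℂ,
      (∀ α β : V, Φ.IsPos α → Φ.IsPos β → Φ.IsPos (α + β) → a (α + β) = a α + a β) ↔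
      (∃ c : Fin n → ℂ, ∀ α : V, Φ.IsPos α → a α = ∑ i, c i * (Φ.coord α i : ℂ))) ∧
    LinearIndependent ℂ
      (fun i : Fin n => fun β : {β : V // Φ.IsPos β} => (Φ.coord β.1 i : ℂ)) ∧
    Submodule.span ℂ
      (Set.range fun i : Fin n => fun β : {β : V // Φ.IsPos β} => (Φ.coord β.1 i : ℂ)) =
      Φ.addFunctions ∧
    Module.finrank ℂ Φ.addFunctions = n := by
  refine ⟨Φ.additive_iff, Φ.coord_linearIndependent, Φ.span_coord, ?_⟩
  rw [← Φ.span_coord, finrank_span_eq_card Φ.coord_linearIndependent, Fintype.card_fin]
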